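/- arXiv:1003.5072 — 2 statements merged into one kernel-verified Lean document; each statement's English description precedes it below -/
import Mathlib

section
/- Let n ≥ 1, let u₁, u₂ > 0 and set q₁ = 1/(2u₁). Then for every bounded Lipschitz function f : ℝ^n → ℝ and every x ∈ ℝ^n, P_{u₁}( e^{q₁ Q_1 f} )(x) ≤ exp( q₁ P_{u₂} f (x) ) · exp( (n/2) · ( u₂/u₁ − 1 − log(u₂/u₁) ) ) (the exponential-integrability form of the dimensional local transportation inequality for the heat semigroup on ℝ^n). -/
open MeasureTheory Real

/-- Euclidean heat semigroup, with `heat n 0 f = f`. -/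
noncomputable def heat (n : ℕ) (t : ℝ) (f : EuclideanSpace ℝ (Fin n) → ℝ)
    (x : EuclideanSpace ℝ (Fin n)) : ℝ :=
  if t = 0 then f x
  else (4 * π * t) ^ (-(n : ℝ) / 2) * ∫ y, f y * Real.exp (-‖x - y‖ ^ 2 / (4 * t))

/-- Hopf-Lax (Hamilton-Jacobi) semigroup on `ℝ^n`. -/
noncomputable def hopfLax (n : ℕ) (t : ℝ) (f : EuclideanSpace ℝ (Fin n) → ℝ)
    (x : EuclideanSpace ℝ (Fin n)) : ℝ :=
  ⨅ y : EuclideanSpace ℝ (Fin n), (f y + ‖x - y‖ ^ 2 / (2 * t))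

/-!
Property (τ), the inequality `∫ exp (infConv c f) dμ ≤ exp (∫ f dν + κ)`, tensorizes: apply it one
coordinate at a time. For a quadratic cost and Gaussian measures this reduces the theorem to the
line. There, let `T` be the monotone transport of `N(0, v₂)` onto the normalisation of
`exp (infConv c f) • N(0, v₁)`. Take the logarithm of its Monge-Ampère equation at `y`, bound
`infConv c f (T y)` by `f y + c (T y - y)` and `log (a T')` by `a T' - 1` with `a = v₂ / v₁`, then
integrate against `N(0, v₂)`: Stein's identity cancels every term containing `T`.
-/

open ProbabilityTheory
open scoped NNReal

/-- The infimal convolution `x ↦ inf_y (f y + c (x - y))` of `f` with a translation-invariant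
transport cost `c`; the Hopf-Lax semigroup is the case of a quadratic cost. -/
noncomputable def infConv {E : Type*} [AddCommGroup E] (c f : E → ℝ) (x : E) : ℝ :=
  ⨅ y, (f y + c (x - y))

/-- Maurey's property (τ) for a pair of measures: `∫ exp (infConv c f) dμ ≤ exp (∫ f dν + κ)` for
every bounded measurable `f`. The boundedness of `f` keeps the infimum and both integrals away from
their junk values. -/
def InfConvInequality {E : Type*} [AddCommGroup E] [MeasurableSpace E] (c : E → ℝ)
    (μ ν : Measure E) (κ : ℝ) : Prop :=
  ∀ f : E → ℝ, Measurable f → ∀ C : ℝ, (∀ x, |f x| ≤ C) →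
    ∫ x, exp (infConv c f x) ∂μ ≤ exp (∫ x, f x ∂ν + κ)

/-- A continuous nonnegative cost function which charges nothing for not moving. -/
structure IsCost {E : Type*} [Zero E] [TopologicalSpace E] (c : E → ℝ) : Prop where
  continuous : Continuous c
  nonneg : ∀ x, 0 ≤ c x
  map_zero : c 0 = 0

section InfConv

variable {E : Type*} [AddCommGroup E] {c f : E → ℝ} {m C : ℝ}

lemma bddBelow_range_add_cost (hc : ∀ x, 0 ≤ c x) (hf : ∀ x, m ≤ f x) (x : E) :
    BddBelow (Set.range fun y => f y + c (x - y)) :=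
  ⟨m, Set.forall_mem_range.mpr fun y => le_add_of_le_of_nonneg (hf y) (hc _)⟩

lemma infConv_le_add (hc : ∀ x, 0 ≤ c x) (hf : ∀ x, m ≤ f x) (x y : E) :
    infConv c f x ≤ f y + c (x - y) :=
  ciInf_le (bddBelow_range_add_cost hc hf x) y

lemma infConv_le (hc : ∀ x, 0 ≤ c x) (hc0 : c 0 = 0) (hf : ∀ x, m ≤ f x) (x : E) :
    infConv c f x ≤ f x := by
  simpa [hc0] using infConv_le_add hc hf x x

lemma exp_infConv_le (hc : ∀ x, 0 ≤ c x) (hc0 : c 0 = 0) (hf : ∀ x, |f x| ≤ C) (x : E) :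
    exp (infConv c f x) ≤ exp C :=
  exp_le_exp.mpr <|
    (infConv_le hc hc0 (fun y => neg_le_of_abs_le (hf y)) x).trans (le_of_abs_le (hf x))

lemma mul_infConv {r : ℝ} (hr : 0 ≤ r) (c f : E → ℝ) (x : E) :
    r * infConv c f x = infConv (fun y => r * c y) (fun y => r * f y) x := by
  simp only [infConv, mul_iInf_of_nonneg hr, mul_add]

lemma infConv_of_subsingleton [Subsingleton E] (c f : E → ℝ) (x : E) :
    infConv c f x = f x + c 0 := by
  simp [infConv, Subsingleton.elim _ x]

lemma le_exp_infConv_add (hc : ∀ x, 0 ≤ c x) (hf : ∀ x, m ≤ f x) {a κ : ℝ} {x : E}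
    (h : ∀ y, a ≤ exp (f y + κ + c (x - y))) : a ≤ exp (infConv c f x + κ) := by
  have hexp : exp (infConv c f x) = ⨅ y, exp (f y + c (x - y)) :=
    exp_monotone.map_ciInf_of_continuousAt continuous_exp.continuousAt
      (bddBelow_range_add_cost hc hf x)
  rw [exp_add, hexp, ← div_le_iff₀ (exp_pos κ)]
  refine le_ciInf fun y => ?_
  rw [div_le_iff₀ (exp_pos κ), ← exp_add, add_right_comm]
  exact h y

lemma infConv_prod_le {F : Type*} [AddCommGroup F] {c₁ : E → ℝ} {c₂ : F → ℝ} {f : E × F → ℝ}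
    (hc₁ : ∀ x, 0 ≤ c₁ x) (hc₂ : ∀ y, 0 ≤ c₂ y) (hf : ∀ z, m ≤ f z) (x : E) (y w : F) :
    infConv (fun z : E × F => c₁ z.1 + c₂ z.2) f (x, y) ≤
      infConv c₁ (fun x' => f (x', w)) x + c₂ (y - w) := by
  rw [← sub_le_iff_le_add]
  refine le_ciInf fun x' => ?_
  have := infConv_le_add (c := fun z : E × F => c₁ z.1 + c₂ z.2)
    (fun z => add_nonneg (hc₁ _) (hc₂ _)) hf (x, y) (x', w)
  simp only [Prod.mk_sub_mk] at this
  linarith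

variable [TopologicalSpace E] [IsTopologicalAddGroup E] [MeasurableSpace E]

lemma measurable_infConv [OpensMeasurableSpace E] (hc : Continuous c) (hc0 : ∀ x, 0 ≤ c x)
    (hf : ∀ x, m ≤ f x) : Measurable (infConv c f) :=
  (upperSemicontinuous_ciInf (bddBelow_range_add_cost hc0 hf) fun y =>
    Continuous.upperSemicontinuous (by fun_prop)).measurable

lemma IsCost.integrable_exp_infConv [OpensMeasurableSpace E] (hc : IsCost c)
    (hf : ∀ x, |f x| ≤ C) (μ : Measure E) [IsFiniteMeasure μ] :
    Integrable (fun x => exp (infConv c f x)) μ := by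
  have hmeas := measurable_infConv hc.continuous hc.nonneg fun y => neg_le_of_abs_le (hf y)
  refine .of_bound hmeas.exp.aestronglyMeasurable (exp C) (ae_of_all _ fun x => ?_)
  rw [norm_of_nonneg (exp_nonneg _)]
  exact exp_infConv_le hc.nonneg hc.map_zero hf x

end InfConv

section Continuity

lemma concaveOn_ciInf {ι E : Type*} [Nonempty ι] [AddCommMonoid E] [SMul ℝ E] {s : Set E}
    (hs : Convex ℝ s) {g : ι → E → ℝ} (hg : ∀ i, ConcaveOn ℝ s (g i))
    (hbdd : ∀ x ∈ s, BddBelow (Set.range fun i => g i x)) :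
    ConcaveOn ℝ s fun x => ⨅ i, g i x := by
  refine ⟨hs, fun x hx y hy a b ha hb hab => le_ciInf fun i => ?_⟩
  refine le_trans ?_ ((hg i).2 hx hy ha hb hab)
  exact add_le_add (mul_le_mul_of_nonneg_left (ciInf_le (hbdd x hx) i) ha)
    (mul_le_mul_of_nonneg_left (ciInf_le (hbdd y hy) i) hb)

/-- Completing the square turns a quadratic infimal convolution into an infimum of affine functions,
which is concave. -/
lemma continuous_infConv_const_mul_norm_sq {E : Type*} [NormedAddCommGroup E]
    [InnerProductSpace ℝ E] [FiniteDimensional ℝ E] {r m : ℝ} (hr : 0 ≤ r) {f : E → ℝ}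
    (hf : ∀ x, m ≤ f x) : Continuous (infConv (fun x => r * ‖x‖ ^ 2) f) := by
  have hbdd := bddBelow_range_add_cost (c := fun x => r * ‖x‖ ^ 2) (fun x => by positivity) hf
  have hsquare : ∀ x y, f y + r * ‖x - y‖ ^ 2 + -(r * ‖x‖ ^ 2) =
      (-2 * r) * inner ℝ y x + (f y + r * ‖y‖ ^ 2) := fun x y => by
    rw [norm_sub_sq_real, real_inner_comm]; ring
  have hconcave : ConcaveOn ℝ Set.univ fun x =>
      infConv (fun x => r * ‖x‖ ^ 2) f x + -(r * ‖x‖ ^ 2) := by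
    simp only [infConv, ciInf_add (hbdd _), hsquare]
    refine concaveOn_ciInf convex_univ (fun y => ?_) fun x _ => ?_
    · exact (((-2 * r) • innerₗ E y).concaveOn convex_univ).add (concaveOn_const _ convex_univ)
    · obtain ⟨b, hb⟩ := hbdd x
      refine ⟨b + -(r * ‖x‖ ^ 2), Set.forall_mem_range.mpr fun y => ?_⟩
      rw [← hsquare]
      exact add_le_add_left (hb (Set.mem_range_self y)) _
  have hsq : Continuous fun x : E => r * ‖x‖ ^ 2 := by fun_prop
  simpa [Function.comp_def, Pi.add_def] using hconcave.locallyLipschitz.continuous.add hsq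

end Continuity

section Tensorization

lemma abs_integral_le_of_forall_abs_le {α : Type*} [MeasurableSpace α] (μ : Measure α)
    [IsProbabilityMeasure μ] {f : α → ℝ} {C : ℝ} (hf : ∀ x, |f x| ≤ C) : |∫ x, f x ∂μ| ≤ C :=
  (norm_integral_le_of_norm_le_const (f := f) (ae_of_all _ hf)).trans_eq (by simp)

lemma IsCost.prod {E F : Type*} [Zero E] [TopologicalSpace E] [Zero F] [TopologicalSpace F]
    {c₁ : E → ℝ} {c₂ : F → ℝ} (hc₁ : IsCost c₁) (hc₂ : IsCost c₂) :
    IsCost fun z : E × F => c₁ z.1 + c₂ z.2 where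
  continuous := (hc₁.continuous.comp continuous_fst).add (hc₂.continuous.comp continuous_snd)
  nonneg z := add_nonneg (hc₁.nonneg _) (hc₂.nonneg _)
  map_zero := by simp [hc₁.map_zero, hc₂.map_zero]

lemma IsCost.pi {ι E : Type*} [Fintype ι] [Zero E] [TopologicalSpace E] {c : E → ℝ}
    (hc : IsCost c) :
    IsCost fun v : ι → E => ∑ i, c (v i) where
  continuous := continuous_finsetSum _ fun i _ => hc.continuous.comp (continuous_apply i)
  nonneg _ := Finset.sum_nonneg fun _ _ => hc.nonneg _
  map_zero := by simp [hc.map_zero]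

lemma InfConvInequality.comp_measurableEquiv {E F : Type*} [AddCommGroup E] [MeasurableSpace E]
    [AddCommGroup F] [MeasurableSpace F] {c : F → ℝ} {μ ν : Measure E} {μ' ν' : Measure F}
    {κ : ℝ} (h : InfConvInequality c μ' ν' κ) (e : E ≃ᵐ F) (he : ∀ x y, e (x - y) = e x - e y)
    (hμ : MeasurePreserving e μ μ') (hν : MeasurePreserving e ν ν') :
    InfConvInequality (fun x => c (e x)) μ ν κ := by
  intro f hf C hC
  have hconv : ∀ x, infConv (fun x => c (e x)) f x = infConv c (f ∘ e.symm) (e x) := fun x =>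
    e.toEquiv.iInf_congr fun y => by simp [he]
  have hint : ∫ x, f x ∂ν = ∫ y, (f ∘ e.symm) y ∂ν' := by
    simp [← hν.integral_comp' (f := e)]
  simp_rw [hconv, hint, hμ.integral_comp' fun y => exp (infConv c (f ∘ e.symm) y)]
  exact h _ (hf.comp e.symm.measurable) C fun y => hC _

variable {E F : Type*} [AddCommGroup E] [TopologicalSpace E] [IsTopologicalAddGroup E]
  [MeasurableSpace E] [OpensMeasurableSpace E] [AddCommGroup F] [MeasurableSpace F]

/-- Freeze the second coordinate at an arbitrary competitor `w`, apply the inequality in the first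
coordinate, and then optimise over `w`. -/
lemma InfConvInequality.integral_exp_infConv_prod_le {c₁ : E → ℝ} {c₂ : F → ℝ} {μ ν : Measure E}
    [IsFiniteMeasure μ] [IsProbabilityMeasure ν] {κ : ℝ} (hc₁ : IsCost c₁) (hc₂ : ∀ y, 0 ≤ c₂ y)
    (h : InfConvInequality c₁ μ ν κ) {f : E × F → ℝ} (hf : Measurable f) {C : ℝ}
    (hC : ∀ z, |f z| ≤ C) (y : F) :
    ∫ x, exp (infConv (fun z : E × F => c₁ z.1 + c₂ z.2) f (x, y)) ∂μ ≤
      exp (infConv c₂ (fun w => ∫ x, f (x, w) ∂ν) y + κ) := by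
  have hmarginal : ∀ w, -C ≤ ∫ x, f (x, w) ∂ν := fun w =>
    neg_le_of_abs_le (abs_integral_le_of_forall_abs_le ν fun x => hC (x, w))
  refine le_exp_infConv_add hc₂ hmarginal fun w => ?_
  calc ∫ x, exp (infConv (fun z : E × F => c₁ z.1 + c₂ z.2) f (x, y)) ∂μ
      ≤ ∫ x, exp (infConv c₁ (fun x' => f (x', w)) x) * exp (c₂ (y - w)) ∂μ := by
        refine integral_mono_of_nonneg (ae_of_all _ fun x => exp_nonneg _)
          ((hc₁.integrable_exp_infConv (fun x => hC (x, w)) μ).mul_const _)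
          (ae_of_all _ fun x => ?_)
        dsimp only
        rw [← exp_add, exp_le_exp]
        exact infConv_prod_le hc₁.nonneg hc₂ (fun z => neg_le_of_abs_le (hC z)) x y w
    _ ≤ exp (∫ x, f (x, w) ∂ν + κ) * exp (c₂ (y - w)) := by
        rw [integral_mul_const]
        gcongr
        exact h _ (hf.comp measurable_prodMk_right) C fun x => hC (x, w)
    _ = exp (∫ x, f (x, w) ∂ν + κ + c₂ (y - w)) := (exp_add _ _).symm

lemma InfConvInequality.prod [TopologicalSpace F] [IsTopologicalAddGroup F]
    [OpensMeasurableSpace F] [SecondCountableTopologyEither E F] {c₁ : E → ℝ} {c₂ : F → ℝ}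
    {μ₁ ν₁ : Measure E} {μ₂ ν₂ : Measure F} {κ₁ κ₂ : ℝ} [IsFiniteMeasure μ₁]
    [IsProbabilityMeasure ν₁] [IsFiniteMeasure μ₂] [IsFiniteMeasure ν₂]
    (hc₁ : IsCost c₁) (hc₂ : IsCost c₂)
    (h₁ : InfConvInequality c₁ μ₁ ν₁ κ₁) (h₂ : InfConvInequality c₂ μ₂ ν₂ κ₂) :
    InfConvInequality (fun z : E × F => c₁ z.1 + c₂ z.2) (μ₁.prod μ₂) (ν₁.prod ν₂) (κ₁ + κ₂) := by
  intro f hf C hC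
  set g : F → ℝ := fun y => ∫ x, f (x, y) ∂ν₁
  have hg : Measurable g := hf.stronglyMeasurable.integral_prod_left'.measurable
  have hgC : ∀ y, |g y| ≤ C := fun y =>
    abs_integral_le_of_forall_abs_le ν₁ fun x => hC (x, y)
  have hfi : Integrable f (ν₁.prod ν₂) :=
    .of_bound hf.aestronglyMeasurable C (ae_of_all _ hC)
  calc ∫ z, exp (infConv (fun z : E × F => c₁ z.1 + c₂ z.2) f z) ∂μ₁.prod μ₂
      = ∫ y, ∫ x, exp (infConv (fun z : E × F => c₁ z.1 + c₂ z.2) f (x, y)) ∂μ₁ ∂μ₂ :=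
        integral_prod_symm _ ((hc₁.prod hc₂).integrable_exp_infConv hC _)
    _ ≤ ∫ y, exp (infConv c₂ g y) * exp κ₁ ∂μ₂ := by
        refine integral_mono_of_nonneg
          (ae_of_all _ fun y => integral_nonneg fun x => exp_nonneg _)
          ((hc₂.integrable_exp_infConv hgC μ₂).mul_const _) (ae_of_all _ fun y => ?_)
        dsimp only
        rw [← exp_add]
        exact h₁.integral_exp_infConv_prod_le hc₁ hc₂.nonneg hf hC y
    _ ≤ exp (∫ y, g y ∂ν₂ + κ₂) * exp κ₁ := by
        rw [integral_mul_const]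
        gcongr
        exact h₂ g hg C hgC
    _ = exp (∫ z, f z ∂ν₁.prod ν₂ + (κ₁ + κ₂)) := by
        rw [integral_prod_symm f hfi, ← exp_add, add_assoc, add_comm κ₂]

lemma InfConvInequality.pi [SecondCountableTopology E] {c : E → ℝ} {μ ν : Measure E} {κ : ℝ}
    [IsFiniteMeasure μ] [IsProbabilityMeasure ν] (hc : IsCost c) (h : InfConvInequality c μ ν κ)
    (n : ℕ) :
    InfConvInequality (fun v : Fin n → E => ∑ i, c (v i)) (.pi fun _ => μ) (.pi fun _ => ν)
      (n * κ) := by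
  induction n with
  | zero =>
    intro f _ C _
    simp [infConv_of_subsingleton, Measure.pi_of_empty _ default]
  | succ n ih =>
    have key := (h.prod hc hc.pi ih).comp_measurableEquiv
      (MeasurableEquiv.piFinSuccAbove (fun _ : Fin (n + 1) => E) 0) (fun _ _ => rfl)
      (measurePreserving_piFinSuccAbove (fun _ => μ) 0)
      (measurePreserving_piFinSuccAbove (fun _ => ν) 0)
    have hκ : κ + n * κ = (n + 1 : ℕ) * κ := by push_cast; ring
    simpa [hκ, Fin.sum_univ_succ, MeasurableEquiv.piFinSuccAbove, Fin.tail] using key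

end Tensorization

section MonotoneTransport

lemma hasDerivAt_integral_Iic {E : Type*} [NormedAddCommGroup E] [NormedSpace ℝ E]
    [CompleteSpace E] {g : ℝ → E} (hg : Continuous g) (hgi : Integrable g) (y : ℝ) :
    HasDerivAt (fun z => ∫ x in Set.Iic z, g x) (g y) y := by
  have hsplit : (fun z => ∫ x in Set.Iic z, g x) =
      fun z => (∫ x in Set.Iic 0, g x) + ∫ x in (0 : ℝ)..z, g x := by
    funext z
    rw [← intervalIntegral.integral_Iic_sub_Iic hgi.integrableOn hgi.integrableOn, add_sub_cancel]
  rw [hsplit]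
  exact (intervalIntegral.integral_hasDerivAt_right (hg.intervalIntegrable _ _)
    (hg.stronglyMeasurableAtFilter _ _) hg.continuousAt).const_add _

lemma setIntegral_pos {α : Type*} [MeasurableSpace α] {μ : Measure α} {g : α → ℝ}
    (hgi : Integrable g μ) (hg : ∀ x, 0 < g x) {s : Set α} (hs : μ s ≠ 0) :
    0 < ∫ x in s, g x ∂μ := by
  rw [setIntegral_pos_iff_support_of_nonneg_ae (ae_of_all _ fun x => (hg x).le) hgi.integrableOn,
    Function.support_eq_univ fun x => (hg x).ne', Set.univ_inter]
  exact pos_iff_ne_zero.mpr hs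

lemma integral_Iic_mem_Ioo {g : ℝ → ℝ} (hgi : Integrable g) (hg : ∀ x, 0 < g x) (y : ℝ) :
    ∫ x in Set.Iic y, g x ∈ Set.Ioo 0 (∫ x, g x) := by
  have hIoi : 0 < ∫ x in Set.Ioi y, g x := setIntegral_pos hgi hg (by simp)
  have hsplit := intervalIntegral.integral_Iic_add_Ioi (b := y) hgi.integrableOn hgi.integrableOn
  exact ⟨setIntegral_pos hgi hg (by simp), by linarith⟩

lemma exists_integral_Iic_eq {g : ℝ → ℝ} (hg : Continuous g) (hgi : Integrable g) {t : ℝ}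
    (ht : t ∈ Set.Ioo 0 (∫ x, g x)) : ∃ z, ∫ x in Set.Iic z, g x = t := by
  have hbot : Filter.Tendsto (fun z => ∫ x in Set.Iic z, g x) .atBot (nhds 0) :=
    tendsto_integral_Iic_zero Filter.tendsto_id
  have htop : Filter.Tendsto (fun z => ∫ x in Set.Iic z, g x) .atTop (nhds (∫ x, g x)) :=
    (aecover_Iic Filter.tendsto_id).integral_tendsto_of_countably_generated hgi
  exact mem_range_of_exists_le_of_exists_ge
    (continuous_iff_continuousAt.mpr fun y => (hasDerivAt_integral_Iic hg hgi y).continuousAt)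
    ((hbot.eventually_lt_const ht.1).exists.imp fun _ => le_of_lt)
    ((htop.eventually_const_lt ht.2).exists.imp fun _ => le_of_lt)

lemma exists_leftInverse_hasDerivAt {F F' : ℝ → ℝ} (hF : ∀ x, HasDerivAt F (F' x) x)
    (hF' : ∀ x, 0 < F' x) :
    ∃ G : ℝ → ℝ, Function.LeftInverse G F ∧ ∀ x, HasDerivAt G (F' x)⁻¹ (F x) := by
  have hmono : StrictMono F := strictMono_of_hasDerivAt_pos hF hF'
  have hcont : Continuous F := continuous_iff_continuousAt.mpr fun x => (hF x).continuousAt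
  obtain ⟨G, hG⟩ := hmono.injective.hasLeftInverse
  have hrange : ∀ x, Set.range F ∈ nhds (F x) := fun x =>
    Filter.mem_of_superset (Icc_mem_nhds (hmono (sub_one_lt x)) (hmono (lt_add_one x)))
      (isPreconnected_range hcont |>.ordConnected.out (Set.mem_range_self _) (Set.mem_range_self _))
  have hGmono : StrictMonoOn G (Set.range F) := by
    rintro _ ⟨x, rfl⟩ _ ⟨y, rfl⟩ hxy
    simpa only [hG x, hG y] using hmono.lt_iff_lt.mp hxy
  have hGimage : G '' Set.range F = Set.univ := by
    rw [← Set.range_comp, hG.comp_eq_id, Set.range_id]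
  refine ⟨G, hG, fun x => HasDerivAt.of_local_left_inverse (f := F) ?_ ?_ (hF' x).ne' ?_⟩
  · exact hGmono.continuousAt_of_image_mem_nhds (hrange x) (hGimage ▸ Filter.univ_mem)
  · rw [hG x]
    exact hF x
  · filter_upwards [hrange x] with _ ⟨y, hy⟩
    rw [← hy, hG y]

/-- The transport map is `T = F_ρ⁻¹ ∘ F_p`, where `F_g` is the distribution function of `g`. -/
lemma exists_hasDerivAt_transport {p ρ : ℝ → ℝ} (hp : Continuous p) (hρ : Continuous ρ)
    (hp0 : ∀ x, 0 < p x) (hρ0 : ∀ x, 0 < ρ x) (hpi : Integrable p) (hρi : Integrable ρ)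
    (hmass : ∫ x, p x = ∫ x, ρ x) :
    ∃ T : ℝ → ℝ, ∀ y, HasDerivAt T (p y / ρ (T y)) y := by
  obtain ⟨G, hGF, hG⟩ := exists_leftInverse_hasDerivAt (hasDerivAt_integral_Iic hρ hρi) hρ0
  refine ⟨fun y => G (∫ x in Set.Iic y, p x), fun y => ?_⟩
  obtain ⟨z, hz⟩ := exists_integral_Iic_eq hρ hρi (hmass ▸ integral_Iic_mem_Ioo hpi hp0 y)
  have hTy : G (∫ x in Set.Iic y, p x) = z := hz ▸ hGF z
  have hGz : HasDerivAt G (ρ z)⁻¹ (∫ x in Set.Iic y, p x) := hz ▸ hG z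
  dsimp only
  rw [hTy, div_eq_inv_mul]
  exact hGz.comp y (hasDerivAt_integral_Iic hp hpi y)

lemma integrable_comp_transport_mul {p ρ T g : ℝ → ℝ} (hp0 : ∀ x, 0 < p x) (hρ0 : ∀ x, 0 < ρ x)
    (hT : ∀ y, HasDerivAt T (p y / ρ (T y)) y) (hg : Integrable fun x => g x * ρ x) :
    Integrable fun y => g (T y) * p y := by
  have hT'pos : ∀ y, 0 < p y / ρ (T y) := fun y => div_pos (hp0 y) (hρ0 _)
  have hinj : Set.InjOn T Set.univ := (strictMono_of_hasDerivAt_pos hT hT'pos).injective.injOn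
  have hchange := (integrableOn_image_iff_integrableOn_abs_deriv_smul .univ
    (fun y _ => (hT y).hasDerivWithinAt) hinj fun x => g x * ρ x).mp hg.integrableOn
  rw [integrableOn_univ] at hchange
  refine hchange.congr (ae_of_all _ fun y => ?_)
  have := (hρ0 (T y)).ne'
  simp only [abs_of_pos (hT'pos y), smul_eq_mul]
  field_simp

end MonotoneTransport

section Divergence

lemma frequently_abs_lt_of_integrable {g : ℝ → ℝ} (hg : Integrable g) {ε : ℝ} (hε : 0 < ε) :
    ∃ᶠ R in Filter.atTop, |g R| < ε := by
  intro hlarge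
  obtain ⟨a, ha⟩ := Filter.eventually_atTop.mp hlarge
  have hfinite : volume (Set.Ici a) < ⊤ :=
    (measure_mono fun R hR => not_lt.mp (ha R hR)).trans_lt (hg.measure_norm_ge_lt_top hε)
  simp at hfinite

/-- The fundamental theorem of calculus on `[-R, R]`, where `R` runs through a sequence along which
the boundary terms vanish. -/
lemma integral_nonneg_of_hasDerivAt_le {g g' h : ℝ → ℝ} (hg : ∀ y, HasDerivAt g (g' y) y)
    (hgi : Integrable g) (hhi : Integrable h) (hle : ∀ y, g' y ≤ h y) : 0 ≤ ∫ y, h y := by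
  have hFTC : ∀ R, 0 ≤ R → g R - g (-R) ≤ ∫ y in -R..R, h y := fun R hR =>
    intervalIntegral.sub_le_integral_of_hasDeriv_right_of_le (by linarith)
      (fun y _ => (hg y).continuousAt.continuousWithinAt)
      (fun y _ => (hg y).hasDerivWithinAt) hhi.integrableOn fun y _ => hle y
  have hlim : Filter.Tendsto (fun R => ∫ y in -R..R, h y) .atTop (nhds (∫ y, h y)) :=
    intervalIntegral_tendsto_integral hhi Filter.tendsto_neg_atTop_atBot Filter.tendsto_id
  refine le_of_forall_sub_le fun ε hε => ge_of_tendsto_of_frequently hlim ?_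
  have hsmall := frequently_abs_lt_of_integrable (hgi.sub hgi.comp_neg) hε
  refine (hsmall.and_eventually (Filter.eventually_ge_atTop 0)).mono fun R ⟨hR, hR0⟩ => ?_
  simp only [Pi.sub_apply, zero_sub] at *
  exact (neg_le_of_abs_le hR.le).trans (hFTC R hR0)

end Divergence

section Gaussian

variable {v : ℝ≥0}

lemma continuous_gaussianPDFReal (m : ℝ) (v : ℝ≥0) : Continuous (gaussianPDFReal m v) := by
  unfold gaussianPDFReal
  fun_prop

lemma hasDerivAt_gaussianPDFReal (m : ℝ) (v : ℝ≥0) (y : ℝ) :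
    HasDerivAt (gaussianPDFReal m v) (-((y - m) / v) * gaussianPDFReal m v y) y := by
  have hexponent : HasDerivAt (fun y => -(y - m) ^ 2 / (2 * v)) (-((y - m) / v)) y := by
    refine ((((hasDerivAt_id' y).sub_const m).pow 2).fun_neg.div_const (2 * (v : ℝ))).congr_deriv ?_
    rw [← mul_div_mul_left (y - m) (v : ℝ) two_ne_zero]
    ring
  refine (hexponent.exp.const_mul (√(2 * π * v))⁻¹).congr_deriv ?_
  simp only [gaussianPDFReal]
  ring

lemma log_gaussianPDFReal (hv : v ≠ 0) (m y : ℝ) :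
    log (gaussianPDFReal m v y) = -(log (2 * π * v) / 2) - (y - m) ^ 2 / (2 * v) := by
  have : (0 : ℝ) < v := by positivity
  rw [gaussianPDFReal, log_mul (by positivity) (by positivity), log_exp, log_inv,
    log_sqrt (by positivity)]
  ring

lemma integrable_gaussianReal_iff (hv : v ≠ 0) {m : ℝ} {f : ℝ → ℝ} :
    Integrable f (gaussianReal m v) ↔ Integrable fun y => f y * gaussianPDFReal m v y := by
  rw [gaussianReal_of_var_ne_zero m hv, integrable_withDensity_iff (measurable_gaussianPDF m v)
    (ae_of_all _ fun _ => gaussianPDF_lt_top)]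
  simp only [toReal_gaussianPDF]

lemma integral_gaussianReal_eq_integral_mul (hv : v ≠ 0) (m : ℝ) (f : ℝ → ℝ) :
    ∫ y, f y ∂gaussianReal m v = ∫ y, f y * gaussianPDFReal m v y := by
  simp only [integral_gaussianReal_eq_integral_smul hv, smul_eq_mul, mul_comm]

lemma integrable_sq_gaussianReal (v : ℝ≥0) : Integrable (fun y => y ^ 2) (gaussianReal 0 v) :=
  (memLp_id_gaussianReal 2).integrable_sq

lemma integral_sq_gaussianReal (v : ℝ≥0) : ∫ y, y ^ 2 ∂gaussianReal 0 v = v := by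
  rw [← variance_fun_id_gaussianReal (μ := 0) (v := v),
    variance_of_integral_eq_zero (by fun_prop) (by simp)]

/-- Stein's identity `∫ (v S' - (y - m) S) dγ = 0` in the form of an inequality, because `S'` may
fail to be integrable. -/
lemma integral_nonneg_of_stein_nonneg (hv : v ≠ 0) {m : ℝ} {h S S' : ℝ → ℝ}
    (hS : ∀ y, HasDerivAt S (S' y) y) (hSi : Integrable S (gaussianReal m v))
    (hhi : Integrable h (gaussianReal m v))
    (hle : ∀ y, 0 ≤ h y + (v * S' y - (y - m) * S y)) : 0 ≤ ∫ y, h y ∂gaussianReal m v := by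
  rw [integrable_gaussianReal_iff hv] at hSi hhi
  rw [integral_gaussianReal_eq_integral_mul hv]
  refine integral_nonneg_of_hasDerivAt_le
    (fun y => ((hS y).mul (hasDerivAt_gaussianPDFReal m v y)).const_mul (-(v : ℝ)))
    (hSi.const_mul _) hhi fun y => ?_
  have hfactor : -(v : ℝ) * (S' y * gaussianPDFReal m v y +
      S y * (-((y - m) / v) * gaussianPDFReal m v y)) =
      -(v * S' y - (y - m) * S y) * gaussianPDFReal m v y := by
    field_simp
    ring
  rw [hfactor]
  exact mul_le_mul_of_nonneg_right (by linarith [hle y]) (gaussianPDFReal_nonneg _ _ _)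

end Gaussian

section GaussianInfConv

variable {v₁ v₂ : ℝ≥0}

/-- The last clause is the logarithm of the Monge-Ampère equation for transporting
`gaussianReal m₂ v₂` onto the normalisation of `exp Q • gaussianReal m₁ v₁`. -/
lemma exists_transport_tilted_gaussianReal (hv₁ : v₁ ≠ 0) (hv₂ : v₂ ≠ 0) (m₁ m₂ : ℝ) {Q : ℝ → ℝ}
    (hQ : Continuous Q) {C : ℝ} (hQC : ∀ x, Q x ≤ C) :
    ∃ T T' : ℝ → ℝ, (∀ y, HasDerivAt T (T' y) y) ∧ Integrable T (gaussianReal m₂ v₂) ∧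
      (∀ y, 0 < T' y) ∧ ∀ y, log (T' y) + Q (T y) + log (gaussianPDFReal m₁ v₁ (T y)) =
        log (∫ x, exp (Q x) ∂gaussianReal m₁ v₁) + log (gaussianPDFReal m₂ v₂ y) := by
  set W := ∫ x, exp (Q x) ∂gaussianReal m₁ v₁ with hWdef
  have hexp : ∀ᵐ x ∂gaussianReal m₁ v₁, ‖exp (Q x)‖ ≤ exp C := ae_of_all _ fun x => by
    simpa using hQC x
  have hexpm : AEStronglyMeasurable (fun x => exp (Q x)) (gaussianReal m₁ v₁) := by fun_prop
  have hexpi : Integrable (fun x => exp (Q x)) (gaussianReal m₁ v₁) := .of_bound hexpm _ hexp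
  have hW : 0 < W := integral_exp_pos hexpi
  have hpdf₁ := gaussianPDFReal_pos m₁ v₁ (hv := hv₁)
  have hpdf₂ := gaussianPDFReal_pos m₂ v₂ (hv := hv₂)
  have hp0 : ∀ y, 0 < W * gaussianPDFReal m₂ v₂ y := fun y => mul_pos hW (hpdf₂ y)
  have hρ0 : ∀ x, 0 < exp (Q x) * gaussianPDFReal m₁ v₁ x := fun x => mul_pos (exp_pos _) (hpdf₁ x)
  obtain ⟨T, hT⟩ := exists_hasDerivAt_transport (p := fun y => W * gaussianPDFReal m₂ v₂ y)
    (ρ := fun x => exp (Q x) * gaussianPDFReal m₁ v₁ x)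
    ((continuous_gaussianPDFReal m₂ v₂).const_mul W)
    (hQ.rexp.mul (continuous_gaussianPDFReal m₁ v₁)) hp0 hρ0
    ((integrable_gaussianPDFReal m₂ v₂).const_mul W) ((integrable_gaussianReal_iff hv₁).mp hexpi)
    (by rw [integral_const_mul, integral_gaussianPDFReal_eq_one m₂ hv₂, mul_one, hWdef,
      integral_gaussianReal_eq_integral_mul hv₁])
  refine ⟨T, _, hT, ?_, fun y => div_pos (hp0 y) (hρ0 _), fun y => ?_⟩
  · have hid : Integrable (fun x => x * exp (Q x)) (gaussianReal m₁ v₁) :=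
      ((memLp_id_gaussianReal 1).integrable le_rfl).mul_bdd hexpm hexp
    rw [integrable_gaussianReal_iff hv₁] at hid
    have hTp := integrable_comp_transport_mul (g := id) hp0 hρ0 hT (by simpa [mul_assoc] using hid)
    rw [integrable_gaussianReal_iff hv₂]
    refine (hTp.const_mul W⁻¹).congr (ae_of_all _ fun y => ?_)
    simp only [id]
    field_simp
  · rw [log_div (hp0 y).ne' (hρ0 _).ne', log_mul hW.ne' (hpdf₂ y).ne',
      log_mul (exp_pos _).ne' (hpdf₁ _).ne', log_exp]
    ring

lemma le_add_stein_of_log_eq (hv₁ : v₁ ≠ 0) (hv₂ : v₂ ≠ 0) {w Q t t' y b : ℝ} (ht' : 0 < t')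
    (hQ : Q ≤ b + (2 * v₁ : ℝ)⁻¹ * (t - y) ^ 2)
    (hlog : log t' + Q + log (gaussianPDFReal 0 v₁ t) = w + log (gaussianPDFReal 0 v₂ y)) :
    w ≤ b + ((2 * v₁ : ℝ)⁻¹ + (2 * v₂ : ℝ)⁻¹) * y ^ 2 - 1 - log (v₂ / v₁) / 2 +
      (v₂ * (t' / v₁) - y * (t / v₁)) := by
  have ha : (0 : ℝ) < v₂ / v₁ := by positivity
  have hconcave : log (v₂ / v₁) + log t' ≤ v₂ / v₁ * t' - 1 := by
    rw [← log_mul ha.ne' ht'.ne']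
    exact log_le_sub_one_of_pos (mul_pos ha ht')
  have hnormalization : log (2 * π * v₂) = log (2 * π * v₁) + log (v₂ / v₁) := by
    rw [← log_mul (by positivity) ha.ne']
    congr 1
    field_simp
  have hsquare : (2 * v₁ : ℝ)⁻¹ * (t - y) ^ 2 - t ^ 2 / (2 * v₁) + y ^ 2 / (2 * v₂) =
      ((2 * v₁ : ℝ)⁻¹ + (2 * v₂ : ℝ)⁻¹) * y ^ 2 - y * (t / v₁) := by
    field_simp
    ring
  have hcomm : (v₂ : ℝ) * (t' / v₁) = v₂ / v₁ * t' := by ring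
  rw [log_gaussianPDFReal hv₁, log_gaussianPDFReal hv₂, sub_zero, sub_zero] at hlog
  linarith

lemma isCost_const_mul_sq {r : ℝ} (hr : 0 ≤ r) : IsCost fun t : ℝ => r * t ^ 2 where
  continuous := by fun_prop
  nonneg t := by positivity
  map_zero := by simp

theorem infConvInequality_gaussianReal (hv₁ : v₁ ≠ 0) (hv₂ : v₂ ≠ 0) :
    InfConvInequality (fun t : ℝ => (2 * v₁ : ℝ)⁻¹ * t ^ 2) (gaussianReal 0 v₁) (gaussianReal 0 v₂)
      ((v₂ / v₁ - 1 - log (v₂ / v₁)) / 2) := by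
  intro f hf C hC
  set c : ℝ → ℝ := fun t => (2 * v₁ : ℝ)⁻¹ * t ^ 2
  have hc : IsCost c := isCost_const_mul_sq (by positivity)
  have hm : ∀ x, -C ≤ f x := fun x => neg_le_of_abs_le (hC x)
  have hQ : Continuous (infConv c f) := by
    simpa only [norm_eq_abs, sq_abs] using
      continuous_infConv_const_mul_norm_sq (r := (2 * v₁ : ℝ)⁻¹) (by positivity) hm
  obtain ⟨T, T', hT, hTi, hT'pos, hlog⟩ := exists_transport_tilted_gaussianReal hv₁ hv₂ 0 0 hQ
    fun x => (infConv_le hc.nonneg hc.map_zero hm x).trans (le_of_abs_le (hC x))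
  set w := log (∫ x, exp (infConv c f x) ∂gaussianReal 0 v₁)
  set s : ℝ := (2 * v₁ : ℝ)⁻¹ + (2 * v₂ : ℝ)⁻¹
  have hpointwise := fun y =>
    le_add_stein_of_log_eq hv₁ hv₂ (hT'pos y) (infConv_le_add hc.nonneg hm (T y) y) (hlog y)
  have hfi : Integrable f (gaussianReal 0 v₂) :=
    .of_bound hf.aestronglyMeasurable C (ae_of_all _ hC)
  have hsq := (integrable_sq_gaussianReal v₂).const_mul s
  have hfsq : Integrable (fun y => f y + s * y ^ 2) (gaussianReal 0 v₂) := hfi.add hsq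
  have hstein := integral_nonneg_of_stein_nonneg hv₂
    (h := fun y => f y + s * y ^ 2 - (1 + log (v₂ / v₁) / 2 + w))
    (fun y => (hT y).div_const v₁) (hTi.div_const v₁) (hfsq.sub (integrable_const _))
    fun y => by linarith [hpointwise y]
  have hs : s * v₂ = (v₂ / v₁ + 1) / 2 := by
    simp only [s]
    field_simp
  rw [integral_sub hfsq (integrable_const _), integral_add hfi hsq, integral_const_mul,
    integral_sq_gaussianReal, hs, integral_const, probReal_univ, one_smul] at hstein
  rw [← log_le_iff_le_exp (integral_exp_pos (hc.integrable_exp_infConv hC _))]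
  linarith

lemma infConvInequality_pi_gaussianReal (hv₁ : v₁ ≠ 0) (hv₂ : v₂ ≠ 0) (n : ℕ) :
    InfConvInequality (fun w : Fin n → ℝ => (2 * v₁ : ℝ)⁻¹ * ∑ i, w i ^ 2)
      (.pi fun _ => gaussianReal 0 v₁) (.pi fun _ => gaussianReal 0 v₂)
      (n / 2 * (v₂ / v₁ - 1 - log (v₂ / v₁))) := by
  have hpi := (infConvInequality_gaussianReal hv₁ hv₂).pi (isCost_const_mul_sq (by positivity)) n
  simpa only [← Finset.mul_sum, mul_div_left_comm (n : ℝ), mul_comm _ ((n : ℝ) / 2)] using hpi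

end GaussianInfConv

section Semigroups

lemma pi_withDensity_ofReal {ι : Type*} [Fintype ι] {α : ι → Type*} [∀ i, MeasurableSpace (α i)]
    (μ : ∀ i, Measure (α i)) [∀ i, SigmaFinite (μ i)] {ρ : ∀ i, α i → ℝ}
    (hρ : ∀ i, Integrable (ρ i) (μ i)) (hρ0 : ∀ i x, 0 ≤ ρ i x) :
    Measure.pi (fun i => (μ i).withDensity fun x => ENNReal.ofReal (ρ i x)) =
      (Measure.pi μ).withDensity fun v => ENNReal.ofReal (∏ i, ρ i (v i)) := by
  have := fun i => isFiniteMeasure_withDensity_ofReal (hρ i).2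
  refine Measure.pi_eq fun s hs => ?_
  rw [withDensity_apply _ (.univ_pi hs), Measure.restrict_pi_pi,
    ← ofReal_integral_eq_lintegral_ofReal (.fintype_prod_dep fun i => (hρ i).restrict)
      (ae_of_all _ fun v => Finset.prod_nonneg fun i _ => hρ0 i _),
    integral_fintype_prod_eq_prod,
    ENNReal.ofReal_prod_of_nonneg fun i _ => integral_nonneg (hρ0 i)]
  refine Finset.prod_congr rfl fun i _ => ?_
  rw [withDensity_apply _ (hs i),
    ofReal_integral_eq_lintegral_ofReal (hρ i).restrict (ae_of_all _ (hρ0 i))]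

lemma integral_pi_gaussianReal {ι : Type*} [Fintype ι] {m : ι → ℝ} {v : ι → ℝ≥0}
    (hv : ∀ i, v i ≠ 0) (g : (ι → ℝ) → ℝ) :
    ∫ w, g w ∂Measure.pi (fun i => gaussianReal (m i) (v i)) =
      ∫ w, g w * ∏ i, gaussianPDFReal (m i) (v i) (w i) := by
  have hprod : ∀ w : ι → ℝ, 0 ≤ ∏ i, gaussianPDFReal (m i) (v i) (w i) := fun w =>
    Finset.prod_nonneg fun i _ => gaussianPDFReal_nonneg _ _ _
  simp only [fun i => gaussianReal_of_var_ne_zero (m i) (hv i), gaussianPDF_def]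
  rw [pi_withDensity_ofReal _ (fun i => integrable_gaussianPDFReal _ _)
    fun i => gaussianPDFReal_nonneg _ _, ← volume_pi,
    integral_withDensity_eq_integral_toReal_smul (by fun_prop) (by simp)]
  simp only [ENNReal.toReal_ofReal (hprod _), smul_eq_mul, mul_comm]

lemma prod_gaussianPDFReal {n : ℕ} (v : ℝ≥0) (w : Fin n → ℝ) :
    ∏ i, gaussianPDFReal 0 v (w i) =
      (2 * π * v) ^ (-(n : ℝ) / 2) * exp (-‖WithLp.toLp 2 w‖ ^ 2 / (2 * v)) := by
  simp only [gaussianPDFReal, sub_zero]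
  rw [Finset.prod_mul_distrib, Finset.prod_const, Finset.card_univ, Fintype.card_fin, ← exp_sum,
    ← Finset.sum_div, Finset.sum_neg_distrib, sqrt_eq_rpow, ← rpow_neg (by positivity),
    ← rpow_mul_natCast (by positivity), EuclideanSpace.real_norm_sq_eq]
  congr 2
  ring

lemma heat_eq_integral_pi_gaussianReal {n : ℕ} {u : ℝ≥0} (hu : u ≠ 0)
    (f : EuclideanSpace ℝ (Fin n) → ℝ) (x : EuclideanSpace ℝ (Fin n)) :
    heat n u f x =
      ∫ w, f (x - WithLp.toLp 2 w) ∂Measure.pi fun _ : Fin n => gaussianReal 0 (2 * u) := by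
  rw [heat, if_neg (by simpa using hu), integral_pi_gaussianReal fun _ => by simpa using hu,
    ← integral_const_mul, ← integral_sub_left_eq_self _ volume x,
    ← (PiLp.volume_preserving_toLp (Fin n)).integral_comp
      (MeasurableEquiv.toLp 2 _).measurableEmbedding]
  refine integral_congr_ae (ae_of_all _ fun w => ?_)
  dsimp only
  rw [prod_gaussianPDFReal, sub_sub_cancel]
  push_cast
  ring_nf

lemma hopfLax_sub_toLp {n : ℕ} (t : ℝ) (f : EuclideanSpace ℝ (Fin n) → ℝ)
    (x : EuclideanSpace ℝ (Fin n)) (w : Fin n → ℝ) :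
    hopfLax n t f (x - WithLp.toLp 2 w) =
      infConv (fun w => (2 * t)⁻¹ * ∑ i, w i ^ 2) (fun w => f (x - WithLp.toLp 2 w)) w := by
  refine (Equiv.iInf_congr ((WithLp.equiv 2 (Fin n → ℝ)).symm.trans (Equiv.subLeft x))
    fun w' => ?_).symm
  simp only [Equiv.trans_apply, WithLp.equiv_symm_apply, Equiv.subLeft_apply]
  rw [norm_sub_rev, sub_sub_sub_cancel_left, EuclideanSpace.real_norm_sq_eq, div_eq_inv_mul]
  rfl

end Semigroups

theorem dimensional_local_transport_exponential_form_general (n : ℕ)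
    (u₁ u₂ : ℝ) (hu₁ : 0 < u₁) (hu₂ : 0 < u₂)
    (f : EuclideanSpace ℝ (Fin n) → ℝ) (hf : Measurable f)
    (C : ℝ) (hbd : ∀ x, |f x| ≤ C)
    (x : EuclideanSpace ℝ (Fin n)) :
    heat n u₁ (fun y => Real.exp ((1 / (2 * u₁)) * hopfLax n 1 f y)) x ≤
      Real.exp ((1 / (2 * u₁)) * heat n u₂ f x) *
        Real.exp ((n / 2) * (u₂ / u₁ - 1 - Real.log (u₂ / u₁))) := by
  lift u₁ to ℝ≥0 using hu₁.le
  lift u₂ to ℝ≥0 using hu₂.le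
  have hu₁' : u₁ ≠ 0 := by simpa using hu₁.ne'
  have hu₂' : u₂ ≠ 0 := by simpa using hu₂.ne'
  set r : ℝ := 1 / (2 * u₁) with hrdef
  have hr : 0 ≤ r := by positivity
  have hcost : r * (2 * 1 : ℝ)⁻¹ = (2 * (2 * u₁ : ℝ≥0) : ℝ)⁻¹ := by
    push_cast
    rw [hrdef]
    field_simp
  have hratio : (u₂ / u₁ : ℝ) = (2 * u₂ : ℝ≥0) / (2 * u₁ : ℝ≥0) := by
    push_cast
    rw [mul_div_mul_left _ _ two_ne_zero]
  rw [heat_eq_integral_pi_gaussianReal hu₁', heat_eq_integral_pi_gaussianReal hu₂', ← exp_add,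
    ← integral_const_mul, hratio]
  simp only [hopfLax_sub_toLp, mul_infConv hr, ← mul_assoc, hcost]
  refine infConvInequality_pi_gaussianReal (by simpa using hu₁') (by simpa using hu₂') n _
    (by fun_prop) (r * C) fun w => ?_
  rw [abs_mul, abs_of_nonneg hr]
  exact mul_le_mul_of_nonneg_left (hbd _) hr

theorem dimensional_local_transport_exponential_form (n : ℕ) (hn : 1 ≤ n)
    (u₁ u₂ : ℝ) (hu₁ : 0 < u₁) (hu₂ : 0 < u₂)
    (f : EuclideanSpace ℝ (Fin n) → ℝ) (L : NNReal) (hLip : LipschitzWith L f)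
    (C : ℝ) (hbd : ∀ x, |f x| ≤ C)
    (x : EuclideanSpace ℝ (Fin n)) :
    heat n u₁ (fun y => Real.exp ((1 / (2 * u₁)) * hopfLax n 1 f y)) x ≤
      Real.exp ((1 / (2 * u₁)) * heat n u₂ f x) *
        Real.exp ((n / 2) * (u₂ / u₁ - 1 - Real.log (u₂ / u₁))) :=
  dimensional_local_transport_exponential_form_general n u₁ u₂ hu₁ hu₂ f hLip.continuous.measurable
    C hbd x
end

section
/- Let n ≥ 1 and let f : ℝ^n → ℝ be a smooth compactly supported function. Then ∫ f² dγ − ( ∫ f dγ )² ≤ ∫ |∇f|² dγ − (1/(2n)) · ( ∫ Δf dγ )² (refined dimensional Poincaré inequality for the standard Gaussian measure). -/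
open MeasureTheory Real

noncomputable def gaussianMeasure (n : ℕ) : Measure (EuclideanSpace ℝ (Fin n)) :=
  volume.withDensity fun x => ENNReal.ofReal ((2 * π) ^ (-(n : ℝ) / 2) * Real.exp (-‖x‖ ^ 2 / 2))

/-- Laplacian on `ℝ^n` as the sum of second derivatives in the coordinate directions. -/
noncomputable def laplacian (n : ℕ) (f : EuclideanSpace ℝ (Fin n) → ℝ)
    (x : EuclideanSpace ℝ (Fin n)) : ℝ :=
  ∑ i : Fin n,
    fderiv ℝ (fderiv ℝ f) x (EuclideanSpace.single i 1) (EuclideanSpace.single i 1)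

/-!
The covariance of `f` and `|x|²` under `γ` is `∫ ⟪∇f, x⟫ dγ`, which is `∫ Δf dγ` by Gaussian
integration by parts, and the variance of `|x|²` is `2n`. Hence the Poincaré inequality
`Var h ≤ ∫ |∇h|² dγ` improves itself by `(∫ Δf dγ)² / (2n)` when it is applied to
`h = f - a|x|²` with the optimal `a = (∫ Δf dγ) / (2n)`.

For the Poincaré inequality itself, let `x, y` be independent with law `γ`. Then
`cov(f, g) = -E[f(x) (g(y) - g(x))]`, and `g(y) - g(x)` is the integral over `θ ∈ [0, π/2]` of
the derivative of `g(x cos θ + y sin θ)`. Since `γ ⊗ γ` is invariant under rotations, integration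
by parts gives `cov(f, g) = ∫ sin θ E ⟪∇f(x), ∇g(x cos θ + y sin θ)⟫ dθ`. For `g = f` the inner
expectation is at most `∫ |∇f|² dγ`, and `∫ sin θ dθ = 1`.
-/

section GaussianPoincare

open ProbabilityTheory Module
open scoped Gradient InnerProductSpace RealInnerProductSpace Laplacian

local notation "rot" => ContinuousLinearMap.rotation

section Rotation

variable {F : Type*} [NormedAddCommGroup F] [NormedSpace ℝ F]

lemma rotation_neg_rotation (θ : ℝ) (p : F × F) : rot (-θ) (rot θ p) = p := by
  have h := sin_sq_add_cos_sq θ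
  have h₁ : cos θ • (cos θ • p.1 + sin θ • p.2) + -sin θ • (-sin θ • p.1 + cos θ • p.2) =
      (sin θ ^ 2 + cos θ ^ 2) • p.1 := by module
  have h₂ : sin θ • (cos θ • p.1 + sin θ • p.2) + cos θ • (-sin θ • p.1 + cos θ • p.2) =
      (sin θ ^ 2 + cos θ ^ 2) • p.2 := by module
  simp only [ContinuousLinearMap.rotation_apply, cos_neg, sin_neg, neg_neg, h₁, h₂, h, one_smul]

lemma hasDerivAt_fst_rotation (θ : ℝ) (p : F × F) :
    HasDerivAt (fun t => (rot t p).1) (rot θ p).2 θ := by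
  simp only [ContinuousLinearMap.rotation_apply]
  exact ((hasDerivAt_cos θ).smul_const p.1).add ((hasDerivAt_sin θ).smul_const p.2)

end Rotation

section SmulId

variable {F : Type*} [NormedAddCommGroup F] [NormedSpace ℝ F] {f : F → ℝ} {x : F}

lemma fderiv_smul_id (hf : DifferentiableAt ℝ f x) :
    fderiv ℝ (fun y => f y • y) x =
      f x • ContinuousLinearMap.id ℝ F + (fderiv ℝ f x).smulRight x := by
  rw [fderiv_fun_smul hf differentiableAt_fun_id, fderiv_fun_id]

lemma norm_fderiv_smul_id_le (hf : DifferentiableAt ℝ f x) :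
    ‖fderiv ℝ (fun y => f y • y) x‖ ≤ ‖f x‖ + ‖fderiv ℝ f x‖ * ‖x‖ := by
  rw [fderiv_smul_id hf]
  refine norm_add_le_of_le ?_ (ContinuousLinearMap.norm_smulRight_apply _ _).le
  rw [norm_smul]
  exact mul_le_of_le_one_right (norm_nonneg _) ContinuousLinearMap.norm_id_le

lemma trace_fderiv_smul_id [FiniteDimensional ℝ F] (hf : DifferentiableAt ℝ f x) :
    LinearMap.trace ℝ F (fderiv ℝ (fun y => f y • y) x) =
      finrank ℝ F * f x + fderiv ℝ f x x := by
  have hsmul : ((fderiv ℝ f x).smulRight x : F →ₗ[ℝ] F) =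
      (fderiv ℝ f x : F →ₗ[ℝ] ℝ).smulRight x := rfl
  rw [fderiv_smul_id hf, ContinuousLinearMap.toLinearMap_add, map_add, hsmul,
    LinearMap.trace_smulRight]
  simp [mul_comm]

end SmulId

variable {E : Type*} [NormedAddCommGroup E] [InnerProductSpace ℝ E]

section Gradient

variable [CompleteSpace E] {f : E → ℝ}

lemma gradient_norm_sq (x : E) : ∇ (fun y : E => ‖y‖ ^ 2) x = (2 : ℝ) • x := by
  refine ext_inner_right ℝ fun v => ?_
  rw [inner_gradient_left, fderiv_norm_sq_apply]
  simp [real_inner_smul_left]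

lemma gradient_sub_const_mul_norm_sq {x : E} (hf : DifferentiableAt ℝ f x) (a : ℝ) :
    ∇ (fun y => f y - a * ‖y‖ ^ 2) x = ∇ f x - (2 * a) • x := by
  have hsq : DifferentiableAt ℝ (fun y : E => ‖y‖ ^ 2) x := differentiableAt_id.norm_sq ℝ
  refine ext_inner_right ℝ fun v => ?_
  rw [inner_gradient_left, inner_sub_left, inner_gradient_left,
    fderiv_fun_sub hf (hsq.const_mul a), fderiv_const_mul hsq, fderiv_norm_sq_apply]
  simp only [sub_apply, smul_apply, innerSL_apply_apply, smul_eq_mul, nsmul_eq_mul, Nat.cast_ofNat,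
    real_inner_smul_left]
  ring

lemma norm_gradient (x : E) : ‖∇ f x‖ = ‖fderiv ℝ f x‖ := by
  simp [gradient]

lemma contDiff_gradient {m n : WithTop ℕ∞} (hf : ContDiff ℝ n f) (hmn : m + 1 ≤ n) :
    ContDiff ℝ m (∇ f) :=
  (InnerProductSpace.toDual ℝ E).symm.toContinuousLinearEquiv.contDiff.comp
    (hf.fderiv_right hmn)

lemma inner_fderiv_gradient {x : E} (hf : DifferentiableAt ℝ (fderiv ℝ f) x) (v w : E) :
    ⟪v, fderiv ℝ (∇ f) x w⟫ = fderiv ℝ (fderiv ℝ f) x w v := by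
  have hD := (InnerProductSpace.toDual ℝ E).symm.toContinuousLinearEquiv.hasFDerivAt.comp x
    hf.hasFDerivAt
  have h : fderiv ℝ (∇ f) x = _ := hD.fderiv
  rw [real_inner_comm]
  simp [h]

lemma fderiv_comp_fst_rotation (hf : Differentiable ℝ f) (θ : ℝ) (x y v : E) :
    fderiv ℝ (fun z => f (rot θ (x, z)).1) y v = sin θ * ⟪∇ f (rot θ (x, y)).1, v⟫ := by
  have hrot : HasFDerivAt (fun z => (rot θ (x, z)).1) (sin θ • ContinuousLinearMap.id ℝ E) y :=
    ((hasFDerivAt_id y).const_smul (sin θ)).const_add (cos θ • x)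
  have h : HasFDerivAt (fun z => f (rot θ (x, z)).1) _ y := (hf _).hasFDerivAt.comp y hrot
  rw [inner_gradient_left, h.fderiv]
  simp

lemma integral_inner_gradient_rotation (hf : ContDiff ℝ 1 f) (p : E × E) :
    ∫ θ in 0..π / 2, ⟪∇ f (rot θ p).1, (rot θ p).2⟫ = f p.2 - f p.1 := by
  have hgrad : Continuous (∇ f) := (contDiff_gradient (m := 0) hf (by simp)).continuous
  have hderiv (θ : ℝ) : HasDerivAt (fun t => f (rot t p).1)
      ⟪∇ f (rot θ p).1, (rot θ p).2⟫ θ := by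
    rw [inner_gradient_left]
    exact (hf.differentiable one_ne_zero _).hasFDerivAt.comp_hasDerivAt θ
      (hasDerivAt_fst_rotation θ p)
  rw [intervalIntegral.integral_eq_sub_of_hasDerivAt (fun θ _ => hderiv θ)]
  · simp [ContinuousLinearMap.rotation_apply]
  · refine Continuous.intervalIntegrable ?_ _ _
    simp only [ContinuousLinearMap.rotation_apply]
    fun_prop

end Gradient

lemma integrable_inner_of_memLp_two {α F : Type*} [MeasurableSpace α] [NormedAddCommGroup F]
    [InnerProductSpace ℝ F] {μ : Measure α} {U V : α → F} (hU : MemLp U 2 μ) (hV : MemLp V 2 μ) :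
    Integrable (fun a => ⟪U a, V a⟫) μ :=
  (hU.norm.integrable_mul hV.norm).mono' (hU.1.inner hV.1)
    (.of_forall fun a => norm_inner_le_norm (U a) (V a))

lemma integral_norm_sub_smul_sq {α F : Type*} [MeasurableSpace α] [NormedAddCommGroup F]
    [InnerProductSpace ℝ F] {μ : Measure α} {U V : α → F} (hU : MemLp U 2 μ) (hV : MemLp V 2 μ)
    (c : ℝ) :
    ∫ a, ‖U a - c • V a‖ ^ 2 ∂μ =
      ∫ a, ‖U a‖ ^ 2 ∂μ - 2 * c * ∫ a, ⟪U a, V a⟫ ∂μ + c ^ 2 * ∫ a, ‖V a‖ ^ 2 ∂μ := by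
  have hUV := (integrable_inner_of_memLp_two hU hV).const_mul (2 * c)
  have hUU := hU.integrable_norm_pow two_ne_zero
  have hVV := (hV.integrable_norm_pow two_ne_zero).const_mul (c ^ 2)
  calc ∫ a, ‖U a - c • V a‖ ^ 2 ∂μ
      = ∫ a, (‖U a‖ ^ 2 - 2 * c * ⟪U a, V a⟫ + c ^ 2 * ‖V a‖ ^ 2) ∂μ := by
        congr 1 with a
        rw [norm_sub_sq_real, real_inner_smul_right, norm_smul, mul_pow, norm_eq_abs, sq_abs]
        ring
    _ = ∫ a, ‖U a‖ ^ 2 ∂μ - 2 * c * ∫ a, ⟪U a, V a⟫ ∂μ + c ^ 2 * ∫ a, ‖V a‖ ^ 2 ∂μ := by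
        rw [integral_add (f := fun a => ‖U a‖ ^ 2 - 2 * c * ⟪U a, V a⟫) (hUU.sub hUV) hVV,
          integral_sub hUU hUV, integral_const_mul, integral_const_mul]

section Density

/-- The density of the standard Gaussian measure on a Euclidean space with respect to the Lebesgue
measure. -/
noncomputable def stdGaussianDensity (x : E) : ℝ :=
  (2 * π) ^ (-(finrank ℝ E : ℝ) / 2) * Real.exp (-‖x‖ ^ 2 / 2)

lemma stdGaussianDensity_nonneg (x : E) : 0 ≤ stdGaussianDensity x := by
  unfold stdGaussianDensity; positivity

lemma hasFDerivAt_stdGaussianDensity (x : E) :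
    HasFDerivAt stdGaussianDensity (-stdGaussianDensity x • innerSL ℝ x) x := by
  have h := ((hasStrictFDerivAt_norm_sq x).hasFDerivAt.const_mul (-1 / 2)).exp.const_mul
    ((2 * π) ^ (-(finrank ℝ E : ℝ) / 2))
  have heq : stdGaussianDensity =
      fun y : E => (2 * π) ^ (-(finrank ℝ E : ℝ) / 2) * Real.exp (-1 / 2 * ‖y‖ ^ 2) := by
    ext y
    rw [stdGaussianDensity]
    ring_nf
  rw [heq]
  refine h.congr_fderiv ?_
  ext v
  simp only [smul_apply, innerSL_apply_apply, nsmul_eq_mul, Nat.cast_ofNat, smul_eq_mul]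
  ring

variable [MeasurableSpace E] [BorelSpace E]

lemma measurable_stdGaussianDensity : Measurable (stdGaussianDensity (E := E)) := by
  unfold stdGaussianDensity; fun_prop

variable [FiniteDimensional ℝ E]

lemma integrable_stdGaussianDensity : Integrable (stdGaussianDensity (E := E)) := by
  have h := (GaussianFourier.integrable_cexp_neg_mul_sq_norm_add (b := 1 / 2) (by norm_num) 0
    (0 : E)).norm
  refine (h.const_mul ((2 * π) ^ (-(finrank ℝ E : ℝ) / 2))).congr (.of_forall fun x => ?_)
  have harg : (-(1 / 2) * ‖x‖ ^ 2 + 0 * ⟪0, x⟫ : ℂ) = ((-‖x‖ ^ 2 / 2 : ℝ) : ℂ) := by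
    push_cast
    ring
  simp only [harg, Complex.norm_exp_ofReal, stdGaussianDensity]

lemma integral_stdGaussianDensity_mul_cexp_inner (t : E) :
    ∫ x, (stdGaussianDensity x : ℂ) * Complex.exp (⟪x, t⟫ * Complex.I) =
      Complex.exp (-‖t‖ ^ 2 / 2) := by
  have hpos : (0 : ℝ) < 2 * π := by positivity
  have hconst : ((π : ℂ) / (1 / 2)) ^ ((finrank ℝ E : ℂ) / 2) =
      (((2 * π) ^ ((finrank ℝ E : ℝ) / 2) : ℝ) : ℂ) := by
    rw [Complex.ofReal_cpow hpos.le]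
    push_cast
    ring_nf
  calc ∫ x, (stdGaussianDensity x : ℂ) * Complex.exp (⟪x, t⟫ * Complex.I)
      = ∫ x : E, (((2 * π) ^ (-(finrank ℝ E : ℝ) / 2) : ℝ) : ℂ) *
          Complex.exp (-(1 / 2) * ‖x‖ ^ 2 + Complex.I * ⟪t, x⟫) := by
        congr 1 with x
        rw [stdGaussianDensity, Complex.exp_add, real_inner_comm t x, mul_comm Complex.I]
        push_cast
        ring_nf
    _ = Complex.exp (-‖t‖ ^ 2 / 2) := by
        rw [integral_const_mul, GaussianFourier.integral_cexp_neg_mul_sq_norm_add (by norm_num),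
          hconst, ← mul_assoc, ← Complex.ofReal_mul, ← Real.rpow_add hpos, neg_div,
          neg_add_cancel, rpow_zero, Complex.I_sq, Complex.ofReal_one, one_mul]
        ring_nf

lemma stdGaussian_eq_withDensity :
    stdGaussian E = volume.withDensity fun x => ENNReal.ofReal (stdGaussianDensity x) := by
  have := isFiniteMeasure_withDensity_ofReal (integrable_stdGaussianDensity (E := E)).2
  refine Measure.ext_of_charFun (funext fun t => ?_)
  rw [charFun_stdGaussian, charFun_apply, integral_withDensity_eq_integral_toReal_smul
    measurable_stdGaussianDensity.ennreal_ofReal (by simp),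
    ← integral_stdGaussianDensity_mul_cexp_inner]
  simp [ENNReal.toReal_ofReal (stdGaussianDensity_nonneg _)]

lemma integrable_stdGaussian_iff {g : E → ℝ} :
    Integrable g (stdGaussian E) ↔ Integrable fun x => stdGaussianDensity x * g x := by
  rw [stdGaussian_eq_withDensity, integrable_withDensity_iff_integrable_smul'
    measurable_stdGaussianDensity.ennreal_ofReal (by simp)]
  simp [ENNReal.toReal_ofReal (stdGaussianDensity_nonneg _)]

lemma integral_stdGaussian (g : E → ℝ) :
    ∫ x, g x ∂stdGaussian E = ∫ x, stdGaussianDensity x * g x := by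
  rw [stdGaussian_eq_withDensity, integral_withDensity_eq_integral_toReal_smul
    measurable_stdGaussianDensity.ennreal_ofReal (by simp)]
  simp [ENNReal.toReal_ofReal (stdGaussianDensity_nonneg _)]

lemma gaussianMeasure_eq_stdGaussian (n : ℕ) :
    gaussianMeasure n = stdGaussian (EuclideanSpace ℝ (Fin n)) := by
  simp [gaussianMeasure, stdGaussian_eq_withDensity, stdGaussianDensity]

end Density

variable [FiniteDimensional ℝ E]

local instance : CompleteSpace E := FiniteDimensional.complete ℝ E

lemma laplacian_eq_trace_fderiv_gradient {f : E → ℝ} {x : E}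
    (hf : DifferentiableAt ℝ (fderiv ℝ f) x) :
    Δ f x = LinearMap.trace ℝ E (fderiv ℝ (∇ f) x) := by
  rw [LinearMap.trace_eq_sum_inner _ (stdOrthonormalBasis ℝ E),
    InnerProductSpace.laplacian_eq_iteratedFDeriv_orthonormalBasis f (stdOrthonormalBasis ℝ E)]
  simp [iteratedFDeriv_two_apply, inner_fderiv_gradient hf]

variable [MeasurableSpace E] [BorelSpace E]

section IntegrationByParts

lemma integral_fderiv_stdGaussian {g : E → ℝ} {v : E} (hg : Differentiable ℝ g)
    (hint : Integrable g (stdGaussian E))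
    (hint_fderiv : Integrable (fun x => fderiv ℝ g x v) (stdGaussian E))
    (hint_mul : Integrable (fun x => g x * ⟪x, v⟫) (stdGaussian E)) :
    ∫ x, fderiv ℝ g x v ∂stdGaussian E = ∫ x, g x * ⟪x, v⟫ ∂stdGaussian E := by
  have hD : ∀ x, fderiv ℝ stdGaussianDensity x v * g x =
      -(stdGaussianDensity x * (g x * ⟪x, v⟫)) := fun x => by
    rw [(hasFDerivAt_stdGaussianDensity x).fderiv]
    simp only [smul_apply, innerSL_apply_apply, smul_eq_mul]
    ring
  rw [integral_stdGaussian, integral_stdGaussian,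
    integral_mul_fderiv_eq_neg_fderiv_mul_of_integrable]
  · simp_rw [hD, integral_neg, neg_neg]
  · simp_rw [hD]
    exact (integrable_stdGaussian_iff.1 hint_mul).neg
  · exact integrable_stdGaussian_iff.1 hint_fderiv
  · exact integrable_stdGaussian_iff.1 hint
  · exact fun x _ => (hasFDerivAt_stdGaussianDensity x).differentiableAt
  · exact fun x _ => hg x

lemma integral_trace_fderiv_stdGaussian {F : E → E} (hF : Differentiable ℝ F)
    (hint : Integrable F (stdGaussian E))
    (hint_fderiv : Integrable (fun x => fderiv ℝ F x) (stdGaussian E))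
    (hint_mul : Integrable (fun x => ‖F x‖ * ‖x‖) (stdGaussian E)) :
    ∫ x, LinearMap.trace ℝ E (fderiv ℝ F x) ∂stdGaussian E = ∫ x, ⟪F x, x⟫ ∂stdGaussian E := by
  let b := stdOrthonormalBasis ℝ E
  have hD (x v w : E) : fderiv ℝ (fun y => ⟪v, F y⟫) x w = ⟪v, fderiv ℝ F x w⟫ := by
    rw [fderiv_inner_apply ℝ (differentiableAt_const v) (hF x)]
    simp
  have hderiv (v : E) : Integrable (fun x => ⟪v, fderiv ℝ F x v⟫) (stdGaussian E) :=
    (hint_fderiv.apply_continuousLinearMap v).const_inner v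
  have hmul (v : E) : Integrable (fun x => ⟪v, F x⟫ * ⟪x, v⟫) (stdGaussian E) := by
    refine (hint_mul.const_mul (‖v‖ ^ 2)).mono' ?_ (.of_forall fun x => ?_)
    · exact (hint.aestronglyMeasurable.const_inner).mul (by fun_prop)
    · calc ‖⟪v, F x⟫ * ⟪x, v⟫‖ ≤ (‖v‖ * ‖F x‖) * (‖x‖ * ‖v‖) := by
            rw [norm_mul]
            gcongr <;> exact norm_inner_le_norm _ _
        _ = ‖v‖ ^ 2 * (‖F x‖ * ‖x‖) := by ring
  have hparts (v : E) : ∫ x, ⟪v, fderiv ℝ F x v⟫ ∂stdGaussian E =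
      ∫ x, ⟪v, F x⟫ * ⟪x, v⟫ ∂stdGaussian E := by
    simp_rw [← hD]
    exact integral_fderiv_stdGaussian ((differentiable_const v).inner ℝ hF) (hint.const_inner v)
      (by simpa only [hD] using hderiv v) (hmul v)
  calc ∫ x, LinearMap.trace ℝ E (fderiv ℝ F x) ∂stdGaussian E
      = ∑ i, ∫ x, ⟪b i, fderiv ℝ F x (b i)⟫ ∂stdGaussian E := by
        rw [← integral_finsetSum _ fun i _ => hderiv _]
        simp [LinearMap.trace_eq_sum_inner _ b]
    _ = ∑ i, ∫ x, ⟪b i, F x⟫ * ⟪x, b i⟫ ∂stdGaussian E := by simp_rw [hparts]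
    _ = ∫ x, ⟪F x, x⟫ ∂stdGaussian E := by
        rw [← integral_finsetSum _ fun i _ => hmul _]
        congr 1 with x
        rw [← b.sum_inner_mul_inner]
        simp_rw [real_inner_comm]

end IntegrationByParts

section Moments

lemma memLp_id_stdGaussian : MemLp (fun x : E => x) 2 (stdGaussian E) := IsGaussian.memLp_two_id

lemma memLp_norm_sq_stdGaussian : MemLp (fun x : E => ‖x‖ ^ 2) 2 (stdGaussian E) := by
  refine (memLp_two_iff_integrable_sq (by fun_prop)).2 ?_
  have h := (IsGaussian.memLp_id (stdGaussian E) 4 (by simp)).integrable_norm_pow four_ne_zero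
  simpa only [id_eq, ← pow_mul] using h

lemma integral_norm_sq_stdGaussian : ∫ x, ‖x‖ ^ 2 ∂stdGaussian E = finrank ℝ E := by
  have hid := memLp_id_stdGaussian (E := E)
  have h := integral_trace_fderiv_stdGaussian (E := E) differentiable_fun_id
    (hid.integrable one_le_two) (by simp) (hid.norm.integrable_mul hid.norm)
  simpa [real_inner_self_eq_norm_sq] using h.symm

lemma integral_laplacian_stdGaussian {f : E → ℝ} (hf : ContDiff ℝ 2 f)
    (hgrad : MemLp (∇ f) 2 (stdGaussian E))
    (hint : Integrable (fderiv ℝ (∇ f)) (stdGaussian E)) :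
    ∫ x, Δ f x ∂stdGaussian E = ∫ x, ⟪∇ f x, x⟫ ∂stdGaussian E := by
  have hd : Differentiable ℝ (fderiv ℝ f) :=
    (hf.fderiv_right (m := 1) (by norm_num)).differentiable one_ne_zero
  simp_rw [fun x => laplacian_eq_trace_fderiv_gradient (hd x)]
  exact integral_trace_fderiv_stdGaussian
    ((contDiff_gradient hf (m := 1) (by norm_num)).differentiable one_ne_zero)
    (hgrad.integrable one_le_two) hint (hgrad.norm.integrable_mul memLp_id_stdGaussian.norm)

lemma integral_mul_norm_sq_stdGaussian {f : E → ℝ} (hf : Differentiable ℝ f)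
    (hf_mem : MemLp f 2 (stdGaussian E)) (hgrad : MemLp (∇ f) 2 (stdGaussian E)) :
    ∫ x, f x * ‖x‖ ^ 2 ∂stdGaussian E =
      finrank ℝ E * ∫ x, f x ∂stdGaussian E + ∫ x, ⟪∇ f x, x⟫ ∂stdGaussian E := by
  have hid := memLp_id_stdGaussian (E := E)
  have hint : Integrable (fderiv ℝ fun y => f y • y) (stdGaussian E) := by
    refine ((hf_mem.integrable one_le_two).norm.add (hgrad.norm.integrable_mul hid.norm)).mono'
      (measurable_fderiv ℝ _).aestronglyMeasurable (.of_forall fun x => ?_)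
    simpa [norm_gradient] using norm_fderiv_smul_id_le (hf x)
  have h := integral_trace_fderiv_stdGaussian (F := fun y => f y • y)
    (hf.smul differentiable_fun_id) (memLp_one_iff_integrable.1 (hid.smul hf_mem)) hint
    ((hf_mem.norm.integrable_mul memLp_norm_sq_stdGaussian).congr
      (.of_forall fun x => by simp [norm_smul, pow_two, mul_assoc]))
  simp only [trace_fderiv_smul_id (hf _), ← inner_gradient_left, real_inner_smul_left,
    real_inner_self_eq_norm_sq] at h
  rw [← h, integral_add ((hf_mem.integrable one_le_two).const_mul _)
    (integrable_inner_of_memLp_two hgrad hid), integral_const_mul]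

lemma covariance_norm_sq_stdGaussian {f : E → ℝ} (hf : Differentiable ℝ f)
    (hf_mem : MemLp f 2 (stdGaussian E)) (hgrad : MemLp (∇ f) 2 (stdGaussian E)) :
    cov[f, fun x => ‖x‖ ^ 2; stdGaussian E] = ∫ x, ⟪∇ f x, x⟫ ∂stdGaussian E := by
  rw [covariance_eq_sub hf_mem memLp_norm_sq_stdGaussian, integral_norm_sq_stdGaussian]
  simp only [Pi.mul_apply]
  rw [integral_mul_norm_sq_stdGaussian hf hf_mem hgrad]
  ring

lemma variance_norm_sq_stdGaussian :
    Var[fun x => ‖x‖ ^ 2; stdGaussian E] = 2 * finrank ℝ E := by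
  have hgrad : ∇ (fun x : E => ‖x‖ ^ 2) = fun x => (2 : ℝ) • x := funext gradient_norm_sq
  rw [← covariance_self (by fun_prop), covariance_norm_sq_stdGaussian
    (differentiable_fun_id.norm_sq ℝ) memLp_norm_sq_stdGaussian
    (hgrad ▸ memLp_id_stdGaussian.const_smul (2 : ℝ)), hgrad]
  simp_rw [real_inner_smul_left, real_inner_self_eq_norm_sq]
  rw [integral_const_mul, integral_norm_sq_stdGaussian]

end Moments

section Interpolation

lemma measurePreserving_rotation (θ : ℝ) :
    MeasurePreserving (rot θ : E × E →L[ℝ] E × E) ((stdGaussian E).prod (stdGaussian E))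
      ((stdGaussian E).prod (stdGaussian E)) :=
  ⟨(rot θ).continuous.measurable, IsGaussian.map_rotation_eq_self integral_id_stdGaussian θ⟩

lemma integral_comp_rotation (θ : ℝ) (H : E × E → ℝ) :
    ∫ p, H (rot θ p) ∂(stdGaussian E).prod (stdGaussian E) =
      ∫ p, H p ∂(stdGaussian E).prod (stdGaussian E) :=
  (measurePreserving_rotation θ).integral_comp
    ((rot θ).continuous.measurableEmbedding
      (Function.LeftInverse.injective (rotation_neg_rotation θ))) H

lemma memLp_comp_rotation (ν : Measure ℝ) [IsFiniteMeasure ν] {q : ENNReal} {H : E × E → ℝ}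
    (hH : MemLp H q ((stdGaussian E).prod (stdGaussian E))) :
    MemLp (fun z : ℝ × (E × E) => H (rot z.1 z.2)) q
      (ν.prod ((stdGaussian E).prod (stdGaussian E))) := by
  have hcont : Continuous (Function.uncurry fun (θ : ℝ) (p : E × E) => rot θ p) := by
    simp only [Function.uncurry_def, ContinuousLinearMap.rotation_apply]
    fun_prop
  exact (hH.comp_snd ν).comp_measurePreserving
    ((MeasurePreserving.id ν).skew_product hcont.measurable
      (.of_forall fun θ => (measurePreserving_rotation θ).map_eq))

variable {f g : E → ℝ} {G : E → E}

lemma memLp_inner_fst_snd (hG : MemLp G 2 (stdGaussian E)) :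
    MemLp (fun p : E × E => ⟪G p.1, p.2⟫) 2 ((stdGaussian E).prod (stdGaussian E)) := by
  have hid := memLp_id_stdGaussian (E := E)
  have hmeas : AEStronglyMeasurable (fun p : E × E => ⟪G p.1, p.2⟫)
      ((stdGaussian E).prod (stdGaussian E)) := hG.1.comp_fst.inner hid.1.comp_snd
  refine (memLp_two_iff_integrable_sq hmeas).2 (((hG.integrable_norm_pow two_ne_zero).mul_prod
    (hid.integrable_norm_pow two_ne_zero)).mono' (hmeas.pow 2) (.of_forall fun p => ?_))
  rw [norm_pow, ← mul_pow]
  gcongr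
  exact norm_inner_le_norm _ _

lemma integral_comp_rotation_mul_inner (hf : Differentiable ℝ f)
    (hf_mem : MemLp f 2 (stdGaussian E)) (hgrad : MemLp (∇ f) 2 (stdGaussian E))
    (hG : MemLp G 2 (stdGaussian E)) (θ : ℝ) :
    ∫ p, f (rot θ p).1 * ⟪G p.1, p.2⟫ ∂(stdGaussian E).prod (stdGaussian E) =
      sin θ * ∫ p, ⟪∇ f (rot θ p).1, G p.1⟫ ∂(stdGaussian E).prod (stdGaussian E) := by
  have hrot := measurePreserving_rotation (E := E) θ
  have hfR : MemLp (fun p => f (rot θ p).1) 2 ((stdGaussian E).prod (stdGaussian E)) :=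
    (hf_mem.comp_fst (stdGaussian E)).comp_measurePreserving hrot
  have hgradR : MemLp (fun p => ∇ f (rot θ p).1) 2 ((stdGaussian E).prod (stdGaussian E)) :=
    (hgrad.comp_fst (stdGaussian E)).comp_measurePreserving hrot
  have hmul : Integrable (fun p => f (rot θ p).1 * ⟪G p.1, p.2⟫)
      ((stdGaussian E).prod (stdGaussian E)) := hfR.integrable_mul (memLp_inner_fst_snd hG)
  have hinner := integrable_inner_of_memLp_two hgradR (hG.comp_fst (stdGaussian E))
  rw [← integral_const_mul, integral_prod _ hmul, integral_prod _ (hinner.const_mul _)]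
  refine integral_congr_ae ?_
  filter_upwards [(hfR.integrable one_le_two).prod_right_ae, hmul.prod_right_ae,
    (hinner.const_mul (sin θ)).prod_right_ae] with x hfx hmulx hinnerx
  have hdiff : Differentiable ℝ fun y => f (rot θ (x, y)).1 := by
    simp only [ContinuousLinearMap.rotation_apply]
    fun_prop
  have hparts := integral_fderiv_stdGaussian (v := G x) hdiff hfx
    (by simpa only [fderiv_comp_fst_rotation hf] using hinnerx)
    (by simpa only [real_inner_comm] using hmulx)
  simpa only [fderiv_comp_fst_rotation hf, real_inner_comm] using hparts.symm

lemma integral_mul_inner_comp_rotation (hf : Differentiable ℝ f)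
    (hf_mem : MemLp f 2 (stdGaussian E)) (hgrad : MemLp (∇ f) 2 (stdGaussian E))
    (hG : MemLp G 2 (stdGaussian E)) (θ : ℝ) :
    ∫ p, f p.1 * ⟪G (rot θ p).1, (rot θ p).2⟫
        ∂(stdGaussian E).prod (stdGaussian E) =
      -sin θ * ∫ p, ⟪∇ f p.1, G (rot θ p).1⟫ ∂(stdGaussian E).prod (stdGaussian E) := by
  have h := integral_comp_rotation_mul_inner hf hf_mem hgrad hG (-θ)
  rw [← integral_comp_rotation θ, ← integral_comp_rotation θ (fun p => ⟪_, _⟫)] at h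
  simpa only [rotation_neg_rotation, sin_neg] using h

theorem covariance_stdGaussian_eq_integral_rotation (hf : Differentiable ℝ f) (hg : ContDiff ℝ 1 g)
    (hf_mem : MemLp f 2 (stdGaussian E)) (hg_mem : MemLp g 2 (stdGaussian E))
    (hf_grad : MemLp (∇ f) 2 (stdGaussian E)) (hg_grad : MemLp (∇ g) 2 (stdGaussian E)) :
    cov[f, g; stdGaussian E] = ∫ θ in 0..π / 2, sin θ *
      ∫ p, ⟪∇ f p.1, ∇ g (rot θ p).1⟫ ∂(stdGaussian E).prod (stdGaussian E) := by
  have : IsFiniteMeasure (volume.restrict (Set.uIoc 0 (π / 2))) := by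
    rw [Set.uIoc]; infer_instance
  have hint : Integrable (Function.uncurry fun (θ : ℝ) (p : E × E) =>
      f p.1 * ⟪∇ g (rot θ p).1, (rot θ p).2⟫)
      ((volume.restrict (Set.uIoc 0 (π / 2))).prod ((stdGaussian E).prod (stdGaussian E))) :=
    ((hf_mem.comp_fst _).comp_snd _).integrable_mul
      (memLp_comp_rotation _ (memLp_inner_fst_snd hg_grad))
  have hfg : Integrable (fun p : E × E => f p.1 * g p.1)
      ((stdGaussian E).prod (stdGaussian E)) := (hf_mem.integrable_mul hg_mem).comp_fst _
  have hfg' : Integrable (fun p : E × E => f p.1 * g p.2)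
      ((stdGaussian E).prod (stdGaussian E)) :=
    (hf_mem.integrable one_le_two).mul_prod (hg_mem.integrable one_le_two)
  calc cov[f, g; stdGaussian E]
      = -∫ p, f p.1 * (g p.2 - g p.1) ∂(stdGaussian E).prod (stdGaussian E) := by
        simp_rw [mul_sub]
        rw [covariance_eq_sub hf_mem hg_mem, integral_sub hfg' hfg, integral_prod_mul,
          integral_fun_fst (fun x => f x * g x)]
        simp
    _ = -∫ θ in 0..π / 2, ∫ p, f p.1 * ⟪∇ g (rot θ p).1, (rot θ p).2⟫
          ∂(stdGaussian E).prod (stdGaussian E) := by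
        rw [intervalIntegral_integral_swap hint]
        simp_rw [intervalIntegral.integral_const_mul, integral_inner_gradient_rotation hg]
    _ = ∫ θ in 0..π / 2, sin θ *
          ∫ p, ⟪∇ f p.1, ∇ g (rot θ p).1⟫ ∂(stdGaussian E).prod (stdGaussian E) := by
        simp_rw [integral_mul_inner_comp_rotation hf hf_mem hf_grad hg_grad, neg_mul,
          intervalIntegral.integral_neg, neg_neg]

lemma abs_integral_inner_rotation_le (hG : MemLp G 2 (stdGaussian E)) (θ : ℝ) :
    |∫ p, ⟪G p.1, G (rot θ p).1⟫ ∂(stdGaussian E).prod (stdGaussian E)| ≤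
      ∫ x, ‖G x‖ ^ 2 ∂stdGaussian E := by
  have hG₁ : Integrable (fun p : E × E => ‖G p.1‖ ^ 2) ((stdGaussian E).prod (stdGaussian E)) :=
    (hG.integrable_norm_pow two_ne_zero).comp_fst _
  have hG₂ : Integrable (fun p : E × E => ‖G (rot θ p).1‖ ^ 2)
      ((stdGaussian E).prod (stdGaussian E)) :=
    (measurePreserving_rotation θ).integrable_comp_of_integrable hG₁
  calc |∫ p, ⟪G p.1, G (rot θ p).1⟫ ∂(stdGaussian E).prod (stdGaussian E)|
      ≤ ∫ p, (‖G p.1‖ ^ 2 + ‖G (rot θ p).1‖ ^ 2) / 2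
          ∂(stdGaussian E).prod (stdGaussian E) := by
        rw [← norm_eq_abs]
        refine norm_integral_le_of_norm_le ((hG₁.add hG₂).div_const 2) (.of_forall fun p => ?_)
        have hinner := norm_inner_le_norm (𝕜 := ℝ) (G p.1) (G (rot θ p).1)
        have hsq := two_mul_le_add_sq ‖G p.1‖ ‖G (rot θ p).1‖
        linarith
    _ = ∫ x, ‖G x‖ ^ 2 ∂stdGaussian E := by
        rw [integral_div, integral_add hG₁ hG₂,
          integral_comp_rotation θ fun p : E × E => ‖G p.1‖ ^ 2,
          integral_fun_fst fun x => ‖G x‖ ^ 2]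
        simp

theorem variance_stdGaussian_le (hf : ContDiff ℝ 1 f)
    (hf_mem : MemLp f 2 (stdGaussian E)) (hgrad : MemLp (∇ f) 2 (stdGaussian E)) :
    Var[f; stdGaussian E] ≤ ∫ x, ‖∇ f x‖ ^ 2 ∂stdGaussian E := by
  rw [← covariance_self hf.continuous.measurable.aemeasurable,
    covariance_stdGaussian_eq_integral_rotation (hf.differentiable one_ne_zero) hf hf_mem hf_mem
      hgrad hgrad]
  set B := ∫ x, ‖∇ f x‖ ^ 2 ∂stdGaussian E
  refine (le_norm_self _).trans ((intervalIntegral.norm_integral_le_of_norm_le (by positivity)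
    (g := fun θ => sin θ * B) (.of_forall fun θ hθ => ?_)
    (Continuous.intervalIntegrable (by fun_prop) _ _)).trans_eq ?_)
  · have hsin : 0 ≤ sin θ := sin_nonneg_of_nonneg_of_le_pi hθ.1.le (by linarith [hθ.2, pi_pos])
    rw [norm_mul, norm_of_nonneg hsin]
    exact mul_le_mul_of_nonneg_left (abs_integral_inner_rotation_le hgrad θ) hsin
  · simp [integral_sin]

end Interpolation

theorem variance_stdGaussian_le_sub_add {f : E → ℝ} (hf : ContDiff ℝ 1 f)
    (hf_mem : MemLp f 2 (stdGaussian E)) (hgrad : MemLp (∇ f) 2 (stdGaussian E)) (a : ℝ) :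
    Var[f; stdGaussian E] ≤ ∫ x, ‖∇ f x‖ ^ 2 ∂stdGaussian E -
      2 * a * ∫ x, ⟪∇ f x, x⟫ ∂stdGaussian E + 2 * a ^ 2 * finrank ℝ E := by
  have hd : Differentiable ℝ f := hf.differentiable one_ne_zero
  have hid := memLp_id_stdGaussian (E := E)
  have hsq := (memLp_norm_sq_stdGaussian (E := E)).const_mul a
  have hgrad_sub : ∇ (fun x => f x - a * ‖x‖ ^ 2) = fun x => ∇ f x - (2 * a) • x :=
    funext fun x => gradient_sub_const_mul_norm_sq (hd x) a
  have hpoincare := variance_stdGaussian_le (f := fun x => f x - a * ‖x‖ ^ 2)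
    (hf.sub ((contDiff_norm_sq ℝ).const_smul a)) (hf_mem.sub hsq)
    (hgrad_sub ▸ hgrad.sub (hid.const_smul (2 * a)))
  rw [hgrad_sub, integral_norm_sub_smul_sq hgrad hid, integral_norm_sq_stdGaussian,
    variance_fun_sub hf_mem hsq, covariance_const_mul_right, variance_const_mul,
    covariance_norm_sq_stdGaussian hd hf_mem hgrad, variance_norm_sq_stdGaussian] at hpoincare
  linarith

theorem refined_gaussian_poincare_general [Nontrivial E] {f : E → ℝ} (hf : ContDiff ℝ 2 f)
    (hf_mem : MemLp f 2 (stdGaussian E)) (hgrad : MemLp (∇ f) 2 (stdGaussian E))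
    (hhess : Integrable (fderiv ℝ (∇ f)) (stdGaussian E)) :
    Var[f; stdGaussian E] ≤ ∫ x, ‖∇ f x‖ ^ 2 ∂stdGaussian E -
      1 / (2 * finrank ℝ E) * (∫ x, Δ f x ∂stdGaussian E) ^ 2 := by
  have hdim : (finrank ℝ E : ℝ) ≠ 0 := by exact_mod_cast finrank_pos.ne'
  rw [integral_laplacian_stdGaussian hf hgrad hhess]
  set D := ∫ x, ⟪∇ f x, x⟫ ∂stdGaussian E
  calc Var[f; stdGaussian E]
      ≤ ∫ x, ‖∇ f x‖ ^ 2 ∂stdGaussian E - 2 * (D / (2 * finrank ℝ E)) * D +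
          2 * (D / (2 * finrank ℝ E)) ^ 2 * finrank ℝ E :=
        variance_stdGaussian_le_sub_add (hf.of_le one_le_two) hf_mem hgrad _
    _ = ∫ x, ‖∇ f x‖ ^ 2 ∂stdGaussian E - 1 / (2 * finrank ℝ E) * D ^ 2 := by
        field_simp
        ring

lemma laplacian_eq_laplacian {n : ℕ} (f : EuclideanSpace ℝ (Fin n) → ℝ) :
    laplacian n f = Δ f := by
  rw [InnerProductSpace.laplacian_eq_iteratedFDeriv_orthonormalBasis f
    (EuclideanSpace.basisFun (Fin n) ℝ)]
  ext x
  simp [laplacian, iteratedFDeriv_two_apply]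

end GaussianPoincare

theorem refined_gaussian_poincare (n : ℕ) (hn : 1 ≤ n)
    (f : EuclideanSpace ℝ (Fin n) → ℝ) (hf : ContDiff ℝ (⊤ : ℕ∞) f)
    (hsupp : HasCompactSupport f) :
    ∫ x, f x ^ 2 ∂(gaussianMeasure n) - (∫ x, f x ∂(gaussianMeasure n)) ^ 2 ≤
      ∫ x, ‖gradient f x‖ ^ 2 ∂(gaussianMeasure n) -
        (1 / (2 * n)) * (∫ x, laplacian n f x ∂(gaussianMeasure n)) ^ 2 := by
  have : Nontrivial (EuclideanSpace ℝ (Fin n)) :=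
    Module.nontrivial_of_finrank_pos (R := ℝ) (by rw [finrank_euclideanSpace_fin]; exact hn)
  have hf₂ : ContDiff ℝ 2 f := contDiff_infty.1 hf 2
  have hgrad : ContDiff ℝ 1 (gradient f) := contDiff_gradient hf₂ (by norm_num)
  have hsupp_grad : HasCompactSupport (gradient f) := (hsupp.fderiv ℝ).comp_left (map_zero _)
  have hf_mem := hf.continuous.memLp_of_hasCompactSupport (p := 2)
    (μ := ProbabilityTheory.stdGaussian _) hsupp
  have h := refined_gaussian_poincare_general hf₂ hf_mem
    (hgrad.continuous.memLp_of_hasCompactSupport hsupp_grad)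
    ((hgrad.continuous_fderiv one_ne_zero).integrable_of_hasCompactSupport (hsupp_grad.fderiv ℝ))
  rw [ProbabilityTheory.variance_eq_sub hf_mem, finrank_euclideanSpace_fin] at h
  simpa only [gaussianMeasure_eq_stdGaussian, laplacian_eq_laplacian, Pi.pow_apply] using h
end
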